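/- The layout [P 1 2, V, V] is valid but not deserializable: Len 1 (equivalently, Len 2) is not derivable for it, even though both varfield positions lie in the range of the pointer P 1 2. -/

import Mathlib

/-- A layout item: fixed-length field, variable-length field, or pointer `P o s`
with offset `o` and span `s`. -/
inductive Item : Type where
  | F : Item
  | V : Item
  | P : ℕ → ℕ → Item
deriving DecidableEq

/-- A layout is valid if every pointer `P o s` occurring in it satisfies
`o < |ℓ|` and `s ≤ |ℓ| - o`. -/
def ValidLayout (ℓ : List Item) : Prop :=
  ∀ o s : ℕ, Item.P o s ∈ ℓ → o < ℓ.length ∧ s ≤ ℓ.length - o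

/-- Facts the parser can know about positions of the layout. -/
inductive ParseFact : Type where
  | Beg : ℕ → ParseFact
  | Len : ℕ → ParseFact
  | Val : ℕ → ParseFact
deriving DecidableEq

/-- The smallest set of facts closed under the parser's inference rules. -/
inductive Derivable (ℓ : List Item) : ParseFact → Prop where
  | begin : Derivable ℓ (.Beg 0)
  | fieldF (i : ℕ) : ℓ[i]? = some .F → Derivable ℓ (.Len i)
  | fieldP (i o s : ℕ) : ℓ[i]? = some (.P o s) → Derivable ℓ (.Len i)
  | forwardVal (i : ℕ) : Derivable ℓ (.Beg i) → Derivable ℓ (.Len i) → Derivable ℓ (.Val i)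
  | forwardBeg (i : ℕ) : Derivable ℓ (.Beg i) → Derivable ℓ (.Len i) → Derivable ℓ (.Beg (i+1))
  | backwardBeg (i : ℕ) : Derivable ℓ (.Beg (i+1)) → Derivable ℓ (.Len i) → Derivable ℓ (.Beg i)
  | backwardVal (i : ℕ) : Derivable ℓ (.Beg (i+1)) → Derivable ℓ (.Len i) → Derivable ℓ (.Val i)
  | join (i : ℕ) : Derivable ℓ (.Beg i) → Derivable ℓ (.Beg (i+1)) → Derivable ℓ (.Len i)
  | jumpRight (i o s : ℕ) : ℓ[i]? = some (.P o s) → Derivable ℓ (.Val i) →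
      Derivable ℓ (.Beg o) → Derivable ℓ (.Beg (o+s))
  | jumpLeft (i o s : ℕ) : ℓ[i]? = some (.P o s) → Derivable ℓ (.Val i) →
      Derivable ℓ (.Beg (o+s)) → Derivable ℓ (.Beg o)

/-- A layout is deserializable if the length of every varfield is derivable. -/
def Deserializable (ℓ : List Item) : Prop :=
  ∀ j : ℕ, ℓ[j]? = some Item.V → Derivable ℓ (.Len j)

/-!
A set of positions that contains `0` and is compatible with the fields and the pointers of a layout
contains every position whose beginning the parser can derive, and a length is derivable only for
an item whose two ends both lie in the set or both lie outside it. For `[P 1 2, V, V]` such a set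
is the complement of `{2}`: the pointer only relates `1` and `3`, so nothing ever locates the border
between the two varfields, which is an end of each of them.
-/

/-- A set `B` of positions that contains the start and is closed under moving across a fixed-length
field or a pointer, and under jumping, in either direction, between the two ends of the range of a
pointer that starts in `B`. Such sets bound the positions the parser can locate. -/
structure BoundaryClosed (ℓ : List Item) (B : Set ℕ) : Prop where
  zero_mem : 0 ∈ B
  mem_iff_succ_mem {i : ℕ} {x : Item} : ℓ[i]? = some x → x ≠ .V → (i ∈ B ↔ i + 1 ∈ B)
  mem_iff_add_mem {i o s : ℕ} : ℓ[i]? = some (.P o s) → i ∈ B → (o ∈ B ↔ o + s ∈ B)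

/-- The interpretation of a parse fact when `B` is the set of located positions. A length
is encoded only by its consequence that either end of the item locates the other, and a value by
the location of its item. -/
def ParseFact.Holds (B : Set ℕ) : ParseFact → Prop
  | .Beg i => i ∈ B
  | .Len i => i ∈ B ↔ i + 1 ∈ B
  | .Val i => i ∈ B

theorem Derivable.holds {ℓ : List Item} {B : Set ℕ} {f : ParseFact} (hf : Derivable ℓ f)
    (hB : BoundaryClosed ℓ B) : f.Holds B := by
  induction hf with
  | begin => exact hB.zero_mem
  | fieldF _ hF => exact hB.mem_iff_succ_mem hF nofun
  | fieldP _ _ _ hP => exact hB.mem_iff_succ_mem hP nofun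
  | forwardVal _ _ _ beg _ => exact beg
  | forwardBeg _ _ _ beg len => exact len.mp beg
  | backwardBeg _ _ _ beg_succ len => exact len.mpr beg_succ
  | backwardVal _ _ _ beg_succ len => exact len.mpr beg_succ
  | join _ _ _ beg beg_succ => exact iff_of_true beg beg_succ
  | jumpRight _ _ _ hP _ _ val beg => exact (hB.mem_iff_add_mem hP val).mp beg
  | jumpLeft _ _ _ hP _ _ val beg => exact (hB.mem_iff_add_mem hP val).mpr beg

theorem boundaryClosed_compl_two : BoundaryClosed [.P 1 2, .V, .V] {2}ᶜ where
  zero_mem := by simp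
  mem_iff_succ_mem {i x} hx hV := by
    rcases i with _ | _ | _ | i <;> simp_all
  mem_iff_add_mem {i o s} hP _ := by
    obtain ⟨rfl, rfl⟩ : o = 1 ∧ s = 2 := by
      rcases i with _ | _ | _ | i <;> simp_all
    simp

/-- The layout `[P 1 2, V, V]` is valid but not deserializable: neither `Len 1`
nor `Len 2` is derivable for it, even though both varfield positions lie in the
range of the pointer `P 1 2`. -/
theorem two_varfields_one_pointer_not_deserializable :
    ValidLayout [Item.P 1 2, Item.V, Item.V] ∧
    ¬ Derivable [Item.P 1 2, Item.V, Item.V] (.Len 1) ∧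
    ¬ Derivable [Item.P 1 2, Item.V, Item.V] (.Len 2) ∧
    (∀ j : ℕ, [Item.P 1 2, Item.V, Item.V][j]? = some Item.V → 1 ≤ j ∧ j < 1 + 2) ∧
    ¬ Deserializable [Item.P 1 2, Item.V, Item.V] := by
  have not_len_one : ¬ Derivable [Item.P 1 2, Item.V, Item.V] (.Len 1) := fun h => by
    simpa [ParseFact.Holds] using h.holds boundaryClosed_compl_two
  have not_len_two : ¬ Derivable [Item.P 1 2, Item.V, Item.V] (.Len 2) := fun h => by
    simpa [ParseFact.Holds] using h.holds boundaryClosed_compl_two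
  refine ⟨?valid, not_len_one, not_len_two, ?varfields_in_range,
    fun deserializable => not_len_one (deserializable 1 rfl)⟩
  case valid => simp [ValidLayout]
  case varfields_in_range =>
    intro j hj
    rcases j with _ | _ | _ | j <;> simp at hj ⊢
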